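/- arXiv:1903.12244 — 2 statements merged into one kernel-verified Lean document; each statement's English description precedes it below -/
import Mathlib

section
/- Let q ∈ (1, ∞). Then for every bounded bilinear form A : c₀ × ℓ_q → 𝕂 that is nonnegative (i.e., A(e_{j₁}, e_{j₂}) ≥ 0 for all j₁, j₂), one has ( Σ_{j₁=1}^∞ Σ_{j₂=1}^∞ A(e_{j₁}, e_{j₂})^{q*} )^{1/q*} ≤ ‖A‖. -/
open scoped ENNReal ZeroAtInfty

noncomputable section

/-- The `j`-th standard unit vector in `c₀ = C₀(ℕ, 𝕂)`. -/
def c0Single (𝕂 : Type*) [RCLike 𝕂] (j : ℕ) : C₀(ℕ, 𝕂) :=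
  ⟨⟨fun n => if n = j then 1 else 0, by continuity⟩, by
    have : HasCompactSupport (fun n : ℕ => if n = j then (1 : 𝕂) else 0) := by
      apply HasCompactSupport.intro (K := {j}) isCompact_singleton
      intro n hn
      simp only [Set.mem_singleton_iff] at hn
      simp [hn]
    exact this.is_zero_at_infty⟩

/-!
For a finite set `s` of indices the vector `∑ i ∈ s, e_i` has norm at most one in `c₀`, so
`A (∑ i ∈ s, e_i)` is a functional on `ℓ_q` of norm at most `‖A‖`, and duality bounds the `ℓ_{q*}`
norm of its coefficients `∑ i ∈ s, A (e_i, e_j)` by `‖A‖`. Since the summands are nonnegative and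
`q* ≥ 1`, the `q*`-th power of such a coefficient dominates `∑ i ∈ s, A (e_i, e_j) ^ q*`.
-/

open scoped NNReal ComplexOrder

theorem sum_rpow_le_rpow_sum {ι : Type*} (s : Finset ι) (f : ι → ℝ≥0∞) {p : ℝ} (hp : 1 ≤ p) :
    ∑ i ∈ s, f i ^ p ≤ (∑ i ∈ s, f i) ^ p := by
  induction s using Finset.cons_induction with
  | empty => simp
  | cons i s hi ih =>
    rw [Finset.sum_cons, Finset.sum_cons]
    exact (add_le_add_right ih _).trans (ENNReal.add_rpow_le_rpow_add _ _ hp)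

theorem zeroAtInfty_sum_apply {ι α β : Type*} [TopologicalSpace α] [TopologicalSpace β]
    [AddCommMonoid β] [ContinuousAdd β] (s : Finset ι) (f : ι → C₀(α, β)) (a : α) :
    (∑ i ∈ s, f i) a = ∑ i ∈ s, f i a :=
  map_sum (⟨⟨fun g : C₀(α, β) => g a, rfl⟩, fun _ _ => rfl⟩ : C₀(α, β) →+ β) f s

theorem norm_sum_c0Single_le_one (𝕂 : Type*) [RCLike 𝕂] (s : Finset ℕ) :
    ‖∑ j ∈ s, c0Single 𝕂 j‖ ≤ 1 := by
  rw [← ZeroAtInftyContinuousMap.norm_toBCF_eq_norm]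
  refine (BoundedContinuousFunction.norm_le zero_le_one).2 fun n => ?_
  calc ‖(∑ j ∈ s, c0Single 𝕂 j) n‖ = ‖∑ j ∈ s, if n = j then (1 : 𝕂) else 0‖ :=
        congrArg norm (zeroAtInfty_sum_apply s (c0Single 𝕂) n)
    _ = ‖if n ∈ s then (1 : 𝕂) else 0‖ := by rw [Finset.sum_ite_eq]
    _ ≤ 1 := by split_ifs <;> simp

section Nonneg

variable {𝕂 : Type*} [RCLike 𝕂]

theorem enorm_eq_ofReal_re_of_nonneg {z : 𝕂} (hz : 0 ≤ z) :
    ‖z‖ₑ = ENNReal.ofReal (RCLike.re z) := by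
  rw [← ofReal_norm, ← RCLike.ofReal_re (K := 𝕂) ‖z‖, RCLike.norm_of_nonneg' hz]

theorem enorm_sum_of_nonneg {ι : Type*} {s : Finset ι} {z : ι → 𝕂} (hz : ∀ i ∈ s, 0 ≤ z i) :
    ‖∑ i ∈ s, z i‖ₑ = ∑ i ∈ s, ‖z i‖ₑ := by
  rw [enorm_eq_ofReal_re_of_nonneg (Finset.sum_nonneg hz), map_sum,
    ENNReal.ofReal_sum_of_nonneg fun i hi => (RCLike.nonneg_iff.1 (hz i hi)).1]
  exact Finset.sum_congr rfl fun i hi => (enorm_eq_ofReal_re_of_nonneg (hz i hi)).symm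

end Nonneg

theorem norm_sum_lpSingle_le_one {κ : Type*} [DecidableEq κ] {E : κ → Type*}
    [∀ j, NormedAddCommGroup (E j)] {r : ℝ≥0∞} (hr : 0 < r.toReal) {t : Finset κ}
    {y : ∀ j, E j} (hy : ∑ j ∈ t, ‖y j‖ ^ r.toReal ≤ 1) :
    ‖∑ j ∈ t, lp.single r j (y j)‖ ≤ 1 := by
  rwa [← Real.rpow_le_rpow_iff (lp.norm_nonneg' _) zero_le_one hr, lp.norm_sum_single hr,
    Real.one_rpow]

section LpFunctional

variable {κ 𝕂 : Type*} [DecidableEq κ] [RCLike 𝕂] {r : ℝ≥0∞} [Fact (1 ≤ r)] {p : ℝ}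

theorem sum_nnnorm_apply_lpSingle_mul_le (hr : 0 < r.toReal)
    (f : lp (fun _ : κ => 𝕂) r →L[𝕂] 𝕂) {t : Finset κ} {g : κ → ℝ≥0}
    (hg : ∑ j ∈ t, g j ^ r.toReal ≤ 1) :
    ∑ j ∈ t, ‖f (lp.single r j 1)‖₊ * g j ≤ ‖f‖₊ := by
  choose c hc_norm hc using fun j => RCLike.exists_norm_eq_mul_self (f (lp.single r j 1))
  let y : lp (fun _ : κ => 𝕂) r := ∑ j ∈ t, lp.single r j (c j * ((g j : ℝ) : 𝕂))
  have hy : ‖y‖ ≤ 1 := by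
    refine norm_sum_lpSingle_le_one hr ?_
    simpa [hc_norm] using mod_cast hg
  have hfy : f y = ((∑ j ∈ t, ‖f (lp.single r j 1)‖ * g j : ℝ) : 𝕂) := by
    rw [map_sum, RCLike.ofReal_sum]
    refine Finset.sum_congr rfl fun j _ => ?_
    rw [← mul_one (c j * _), ← smul_eq_mul, lp.single_smul, map_smul, smul_eq_mul,
      RCLike.ofReal_mul, hc]
    ring
  have h_nonneg : 0 ≤ ∑ j ∈ t, ‖f (lp.single r j 1)‖ * g j := by positivity
  have h_le := f.unit_le_opNorm y hy
  rw [hfy, RCLike.norm_of_nonneg h_nonneg] at h_le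
  simpa only [← NNReal.coe_le_coe, NNReal.coe_sum, NNReal.coe_mul, coe_nnnorm] using h_le

theorem tsum_enorm_apply_lpSingle_rpow_le (hp : p.HolderConjugate r.toReal)
    (f : lp (fun _ : κ => 𝕂) r →L[𝕂] 𝕂) :
    ∑' j, ‖f (lp.single r j 1)‖ₑ ^ p ≤ ‖f‖ₑ ^ p := by
  refine ENNReal.summable.tsum_le_of_sum_le fun t => ?_
  -- The supremum in the converse of Hölder's inequality is attained.
  obtain ⟨g, hg, hg_eq⟩ := (NNReal.isGreatest_Lp t (fun j => ‖f (lp.single r j 1)‖₊) hp).1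
  have h_root : (∑ j ∈ t, ‖f (lp.single r j 1)‖₊ ^ p) ^ (1 / p) ≤ ‖f‖₊ :=
    hg_eq.symm.trans_le (sum_nnnorm_apply_lpSingle_mul_le hp.symm.pos f hg)
  rw [one_div, NNReal.rpow_inv_le_iff hp.pos] at h_root
  simpa only [enorm_eq_nnnorm, ← ENNReal.coe_rpow_of_nonneg _ hp.nonneg,
    ← ENNReal.ofNNReal_finsetSum, ENNReal.coe_le_coe] using h_root

variable {ι X : Type*} [SeminormedAddCommGroup X] [NormedSpace 𝕂 X]
  (A : X →L[𝕂] lp (fun _ : κ => 𝕂) r →L[𝕂] 𝕂) {x : ι → X}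

theorem tsum_sum_enorm_apply_lpSingle_rpow_le (hp : p.HolderConjugate r.toReal) {s : Finset ι}
    (hx : ‖∑ i ∈ s, x i‖ ≤ 1) (hA : ∀ i ∈ s, ∀ j, 0 ≤ A (x i) (lp.single r j 1)) :
    ∑' j, (∑ i ∈ s, ‖A (x i) (lp.single r j 1)‖ₑ) ^ p ≤ ‖A‖ₑ ^ p := by
  have h_coeff (j : κ) : ∑ i ∈ s, ‖A (x i) (lp.single r j 1)‖ₑ =
      ‖A (∑ i ∈ s, x i) (lp.single r j 1)‖ₑ := by
    rw [map_sum, _root_.sum_apply, enorm_sum_of_nonneg fun i hi => hA i hi j]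
  have h_norm : ‖A (∑ i ∈ s, x i)‖ₑ ≤ ‖A‖ₑ := enorm_le_iff_norm_le.2 (A.unit_le_opNorm _ hx)
  simp only [h_coeff]
  exact (tsum_enorm_apply_lpSingle_rpow_le hp _).trans (ENNReal.rpow_le_rpow h_norm hp.nonneg)

theorem hardy_littlewood_bilinear_c0_general (hp : p.HolderConjugate r.toReal)
    (hx : ∀ s : Finset ι, ‖∑ i ∈ s, x i‖ ≤ 1)
    (hA : ∀ i j, 0 ≤ A (x i) (lp.single r j 1)) :
    (∑' i, ∑' j, ‖A (x i) (lp.single r j 1)‖ₑ ^ p) ^ (1 / p) ≤ ‖A‖ₑ := by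
  rw [one_div, ENNReal.rpow_inv_le_iff hp.pos]
  refine ENNReal.summable.tsum_le_of_sum_le fun s => ?_
  calc ∑ i ∈ s, ∑' j, ‖A (x i) (lp.single r j 1)‖ₑ ^ p
      = ∑' j, ∑ i ∈ s, ‖A (x i) (lp.single r j 1)‖ₑ ^ p :=
        (Summable.tsum_finsetSum fun _ _ => ENNReal.summable).symm
    _ ≤ ∑' j, (∑ i ∈ s, ‖A (x i) (lp.single r j 1)‖ₑ) ^ p :=
        ENNReal.tsum_le_tsum fun _ => sum_rpow_le_rpow_sum s _ hp.lt.le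
    _ ≤ ‖A‖ₑ ^ p := tsum_sum_enorm_apply_lpSingle_rpow_le A hp (hx s) fun i _ => hA i

end LpFunctional

/-- **Hardy–Littlewood's Theorem 5, endpoint case `p = ∞`.**
Let `q ∈ (1, ∞)` and let `q*` be the conjugate exponent of `q`.  Then every
bounded nonnegative bilinear form `A : c₀ × ℓ_q → 𝕂` satisfies
`(Σ_{j₁} Σ_{j₂} A(e_{j₁},e_{j₂})^{q*})^{1/q*} ≤ ‖A‖`. -/
theorem hardy_littlewood_bilinear_c0
    (𝕂 : Type*) [RCLike 𝕂]
    (q : ℝ) (hq : 1 < q) [Fact (1 ≤ ENNReal.ofReal q)]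
    (qstar : ℝ) (hqstar : 1 / q + 1 / qstar = 1)
    (A : C₀(ℕ, 𝕂) →L[𝕂] lp (fun _ : ℕ => 𝕂) (ENNReal.ofReal q) →L[𝕂] 𝕂)
    (hA : ∀ j₁ j₂ : ℕ, ∃ r : ℝ, 0 ≤ r ∧
      A (c0Single 𝕂 j₁) (lp.single (ENNReal.ofReal q) j₂ 1) = (r : 𝕂)) :
    (∑' j₁ : ℕ, ∑' j₂ : ℕ,
        (ENNReal.ofReal (RCLike.re
          (A (c0Single 𝕂 j₁) (lp.single (ENNReal.ofReal q) j₂ 1)))) ^ qstar)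
      ^ (1 / qstar) ≤ ENNReal.ofReal ‖A‖ := by
  have h_conj : qstar.HolderConjugate (ENNReal.ofReal q).toReal := by
    rw [ENNReal.toReal_ofReal (zero_le_one.trans hq.le)]
    exact (Real.holderConjugate_iff.2 ⟨hq, by simpa only [one_div] using hqstar⟩).symm
  have h_nonneg (j₁ j₂ : ℕ) : 0 ≤ A (c0Single 𝕂 j₁) (lp.single (ENNReal.ofReal q) j₂ 1) :=
    RCLike.nonneg_iff_exists_ofReal.2 (by simpa only [eq_comm] using hA j₁ j₂)
  have h_norm : ENNReal.ofReal ‖A‖ = ‖A‖ₑ := ofReal_norm A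
  simpa only [enorm_eq_ofReal_re_of_nonneg (h_nonneg _ _), h_norm] using
    hardy_littlewood_bilinear_c0_general A h_conj (norm_sum_c0Single_le_one 𝕂) h_nonneg
end
end

section
/- Let m be a positive integer, p₁, …, p_m ∈ (1, ∞) with 1/p₁ + ⋯ + 1/p_m ≥ 1, and let q₁, …, q_m ∈ (0, ∞) be finite exponents. Then the inequality ( Σ_{j₁=1}^∞ ( Σ_{j₂=1}^∞ ⋯ ( Σ_{j_m=1}^∞ A(e_{j₁}, …, e_{j_m})^{q_m} )^{q_{m−1}/q_m} ⋯ )^{q₁/q₂} )^{1/q₁} ≤ ‖A‖ fails for some bounded nonnegative m-linear form A : ℓ_{p₁} × ⋯ × ℓ_{p_m} → 𝕂; that is, no finite exponent q₁ can occur in the outermost sum. -/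
open scoped ENNReal

noncomputable section

/-- The mixed (anisotropic) iterated `ℓ`-norm: for exponents `q 0, …, q (k-1)` and a
nonnegative function `f` of `k` natural indices,
`mixedNorm q f = (Σ_{j₀} (Σ_{j₁} ⋯ (Σ_{j_{k-1}} f(j)^{q_{k-1}})^{q_{k-2}/q_{k-1}} ⋯ )^{q₀/q₁})^{1/q₀}`,
the sums being taken innermost over the last index. -/
noncomputable def mixedNorm : {k : ℕ} → (Fin k → ℝ) → ((Fin k → ℕ) → ℝ≥0∞) → ℝ≥0∞
  | 0, _, f => f (fun i => i.elim0)
  | (_ + 1), q, f =>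
      (∑' j : ℕ, (mixedNorm (fun i => q i.succ) (fun t => f (Fin.cons j t))) ^ (q 0))
        ^ (1 / q 0)

/-!
If `1/p₁ + ⋯ + 1/p_m ≥ 1`, Hölder's inequality makes the diagonal form
`A(x₁, …, x_m) = ∑ₙ x₁(n) ⋯ x_m(n)` bounded on `ℓ_{p₁} × ⋯ × ℓ_{p_m}`, with norm at most `1`.
Its coefficient array is the indicator of the diagonal, so every `j₁` contributes at least `1` to
the outermost sum, which therefore diverges for each finite `q₁`.
-/

section MixedNorm

variable {k : ℕ}

lemma le_mixedNorm {q : Fin k → ℝ} (hq : ∀ i, 0 < q i) (f : (Fin k → ℕ) → ℝ≥0∞)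
    (t : Fin k → ℕ) : f t ≤ mixedNorm q f := by
  induction k with
  | zero => rw [mixedNorm, Subsingleton.elim t]
  | succ k ih =>
    rw [mixedNorm, one_div, ENNReal.le_rpow_inv_iff (hq 0)]
    calc f t ^ q 0
        = f (Fin.cons (t 0) (Fin.tail t)) ^ q 0 := by rw [Fin.cons_self_tail]
      _ ≤ mixedNorm (fun i => q i.succ) (fun u => f (Fin.cons (t 0) u)) ^ q 0 :=
        ENNReal.rpow_le_rpow
          (ih (fun i => hq i.succ) (fun u => f (Fin.cons (t 0) u)) (Fin.tail t)) (hq 0).le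
      _ ≤ _ := ENNReal.le_tsum (t 0)

lemma mixedNorm_eq_top_of_forall_le {q : Fin (k + 1) → ℝ} (hq : ∀ i, 0 < q i)
    {f : (Fin (k + 1) → ℕ) → ℝ≥0∞} {c : ℝ≥0∞} (hc : c ≠ 0)
    (hf : ∀ n, ∃ t, c ≤ f (Fin.cons n t)) : mixedNorm q f = ⊤ := by
  have inner_ge : ∀ n, c ≤ mixedNorm (fun i => q i.succ) (fun t => f (Fin.cons n t)) := fun n =>
    let ⟨t, ht⟩ := hf n
    ht.trans (le_mixedNorm (fun i => hq i.succ) (fun u => f (Fin.cons n u)) t)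
  have outer_sum_eq_top :
      ∑' n, mixedNorm (fun i => q i.succ) (fun t => f (Fin.cons n t)) ^ q 0 = ⊤ := by
    rw [eq_top_iff, ← ENNReal.tsum_const_eq_top_of_ne_zero (α := ℕ) (c := c ^ q 0)
      (by simp [hc, (hq 0).le])]
    exact ENNReal.tsum_le_tsum fun n => ENNReal.rpow_le_rpow (inner_ge n) (hq 0).le
  rw [mixedNorm, outer_sum_eq_top, ENNReal.top_rpow_of_pos (one_div_pos.2 (hq 0))]

end MixedNorm

section Holder

variable {ι α : Type*} [Fintype ι]

-- Here and below, a real exponent `p i = 0` stands for `ℓ_∞`: its weight `(p i)⁻¹` is `0`.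
lemma prod_le_sum_inv_mul_rpow_div {p a : ι → ℝ} (hp : ∀ i, 0 ≤ p i)
    (hsum : 1 ≤ ∑ i, (p i)⁻¹) (ha : ∀ i, 0 ≤ a i) (ha' : ∀ i, a i ≤ 1) :
    ∏ i, a i ≤ (∑ i, (p i)⁻¹ * a i ^ p i) / ∑ i, (p i)⁻¹ := by
  have factor_le : ∀ i, a i ≤ (a i ^ p i) ^ (p i)⁻¹ := fun i => by
    rcases eq_or_ne (p i) 0 with hpi | hpi
    · simpa [hpi] using ha' i
    · rw [Real.rpow_rpow_inv (ha i) hpi]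
  calc ∏ i, a i
      ≤ (∏ i, a i) ^ (∑ i, (p i)⁻¹)⁻¹ :=
        Real.self_le_rpow_of_le_one (Finset.prod_nonneg fun i _ => ha i)
          (Finset.prod_le_one (fun i _ => ha i) fun i _ => ha' i) (inv_le_one_of_one_le₀ hsum)
    _ ≤ (∏ i, (a i ^ p i) ^ (p i)⁻¹) ^ (∑ i, (p i)⁻¹)⁻¹ := by
        gcongr
        · exact Finset.prod_nonneg fun i _ => ha i
        · exact fun i _ => ha i
        · exact factor_le _
    _ ≤ (∑ i, (p i)⁻¹ * a i ^ p i) / ∑ i, (p i)⁻¹ :=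
        Real.geom_mean_le_arith_mean Finset.univ _ _ (fun i _ => inv_nonneg.2 (hp i))
          (zero_lt_one.trans_le hsum) fun i _ => Real.rpow_nonneg (ha i) _

lemma sum_prod_le_one_of_sum_rpow_le_one {p : ι → ℝ} (hp : ∀ i, 0 ≤ p i)
    (hsum : 1 ≤ ∑ i, (p i)⁻¹) {a : ι → α → ℝ} (ha : ∀ i n, 0 ≤ a i n) (ha' : ∀ i n, a i n ≤ 1)
    {s : Finset α} (hs : ∀ i, 0 < p i → ∑ n ∈ s, a i n ^ p i ≤ 1) :
    ∑ n ∈ s, ∏ i, a i n ≤ 1 := by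
  have weighted_le : ∀ i, (p i)⁻¹ * ∑ n ∈ s, a i n ^ p i ≤ (p i)⁻¹ := fun i => by
    rcases (hp i).eq_or_lt with hpi | hpi
    · simp [← hpi]
    · exact mul_le_of_le_one_right (inv_nonneg.2 hpi.le) (hs i hpi)
  calc ∑ n ∈ s, ∏ i, a i n
      ≤ ∑ n ∈ s, (∑ i, (p i)⁻¹ * a i n ^ p i) / ∑ i, (p i)⁻¹ :=
        Finset.sum_le_sum fun n _ =>
          prod_le_sum_inv_mul_rpow_div hp hsum (fun i => ha i n) fun i => ha' i n
    _ = (∑ i, (p i)⁻¹ * ∑ n ∈ s, a i n ^ p i) / ∑ i, (p i)⁻¹ := by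
        simp_rw [← Finset.sum_div, Finset.mul_sum]
        rw [Finset.sum_comm]
    _ ≤ 1 := div_le_one_of_le₀ (Finset.sum_le_sum fun i _ => weighted_le i)
        (zero_le_one.trans hsum)

variable {E : ι → α → Type*} [∀ i n, NormedAddCommGroup (E i n)] {p : ι → ℝ≥0∞}

lemma one_le_sum_inv_toReal (hp : ∀ i, p i ≠ 0) (hsum : 1 ≤ ∑ i, (p i)⁻¹) :
    1 ≤ ∑ i, (p i).toReal⁻¹ := by
  have inv_ne_top : ∀ i, (p i)⁻¹ ≠ ⊤ := fun i => ENNReal.inv_ne_top.2 (hp i)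
  simp_rw [← ENNReal.toReal_inv]
  rw [← ENNReal.toReal_sum fun i _ => inv_ne_top i, ← ENNReal.toReal_one]
  exact ENNReal.toReal_mono (ENNReal.sum_ne_top.2 fun i _ => inv_ne_top i) hsum

lemma sum_prod_norm_le_prod_norm (hp : ∀ i, p i ≠ 0) (hsum : 1 ≤ ∑ i, (p i)⁻¹)
    (x : ∀ i, lp (E i) (p i)) (s : Finset α) :
    ∑ n ∈ s, ∏ i, ‖x i n‖ ≤ ∏ i, ‖x i‖ := by
  have apply_le : ∀ i n, ‖x i n‖ ≤ ‖x i‖ := fun i n => lp.norm_apply_le_norm (hp i) (x i) n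
  have norm_nonneg_lp : ∀ i, 0 ≤ ‖x i‖ := fun i => lp.norm_nonneg' (x i)
  by_cases hx : ∃ i, ‖x i‖ = 0
  · obtain ⟨i, hi⟩ := hx
    have term_eq_zero : ∀ n, ∏ i, ‖x i n‖ = 0 := fun n =>
      Finset.prod_eq_zero (Finset.mem_univ i)
        (le_antisymm (hi ▸ apply_le i n) (norm_nonneg (x i n)))
    simp only [term_eq_zero, Finset.sum_const_zero]
    exact Finset.prod_nonneg fun i _ => norm_nonneg_lp i
  · push Not at hx
    have norm_pos : ∀ i, 0 < ‖x i‖ := fun i => (norm_nonneg_lp i).lt_of_ne' (hx i)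
    have normalized : ∑ n ∈ s, ∏ i, ‖x i n‖ / ‖x i‖ ≤ 1 := by
      refine sum_prod_le_one_of_sum_rpow_le_one (fun i => ENNReal.toReal_nonneg)
        (one_le_sum_inv_toReal hp hsum) (fun i n => div_nonneg (norm_nonneg _) (norm_nonneg_lp i))
        (fun i n => div_le_one_of_le₀ (apply_le i n) (norm_nonneg_lp i)) fun i hpi => ?_
      simp_rw [Real.div_rpow (norm_nonneg _) (norm_nonneg_lp i)]
      rw [← Finset.sum_div]
      exact div_le_one_of_le₀ (lp.sum_rpow_le_norm_rpow hpi (x i) s)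
        (Real.rpow_nonneg (norm_nonneg_lp i) _)
    simp_rw [Finset.prod_div_distrib] at normalized
    rwa [← Finset.sum_div, div_le_one (Finset.prod_pos fun i _ => norm_pos i)] at normalized

lemma summable_prod_norm (hp : ∀ i, p i ≠ 0) (hsum : 1 ≤ ∑ i, (p i)⁻¹)
    (x : ∀ i, lp (E i) (p i)) : Summable fun n => ∏ i, ‖x i n‖ :=
  summable_of_sum_le (fun _ => Finset.prod_nonneg fun _ _ => norm_nonneg _)
    (sum_prod_norm_le_prod_norm hp hsum x)

end Holder

section DiagonalForm

variable (𝕜 : Type*) [NontriviallyNormedField 𝕜] {ι α : Type*} [Fintype ι]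

/-- The multilinear form `(x i)ᵢ ↦ ∏ i, x i n` on a product of sequence spaces: the `n`-th term of
the diagonal form. -/
def coordProd (p : ι → ℝ≥0∞) (n : α) :
    MultilinearMap 𝕜 (fun i => lp (fun _ : α => 𝕜) (p i)) 𝕜 :=
  (MultilinearMap.mkPiAlgebra 𝕜 ι 𝕜).compLinearMap fun i =>
    lp.evalₗ (fun _ : α => 𝕜) (p i) n

lemma coordProd_apply (p : ι → ℝ≥0∞) (n : α) (x : ∀ i, lp (fun _ : α => 𝕜) (p i)) :
    coordProd 𝕜 p n x = ∏ i, x i n := rfl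

variable {p : ι → ℝ≥0∞}

lemma summable_norm_coordProd (hp : ∀ i, p i ≠ 0) (hsum : 1 ≤ ∑ i, (p i)⁻¹)
    (x : ∀ i, lp (fun _ : α => 𝕜) (p i)) : Summable fun n => ‖coordProd 𝕜 p n x‖ := by
  simpa only [coordProd_apply, norm_prod] using summable_prod_norm hp hsum x

lemma norm_tsum_coordProd_le (hp : ∀ i, p i ≠ 0) (hsum : 1 ≤ ∑ i, (p i)⁻¹)
    (x : ∀ i, lp (fun _ : α => 𝕜) (p i)) : ‖∑' n, coordProd 𝕜 p n x‖ ≤ ∏ i, ‖x i‖ :=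
  calc ‖∑' n, coordProd 𝕜 p n x‖
      ≤ ∑' n, ‖coordProd 𝕜 p n x‖ := norm_tsum_le_tsum_norm (summable_norm_coordProd 𝕜 hp hsum x)
    _ = ∑' n, ∏ i, ‖x i n‖ := by simp only [coordProd_apply, norm_prod]
    _ ≤ ∏ i, ‖x i‖ := (summable_prod_norm hp hsum x).tsum_le_of_sum_le
        (sum_prod_norm_le_prod_norm hp hsum x)

variable [CompleteSpace 𝕜]

/-- The diagonal form `x ↦ ∑' n, ∏ i, x i n` as an algebraic multilinear map; the condition on the
exponents makes the series converge, without which `∑'` would not be additive. -/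
def diagonalMultilinearMap (hp : ∀ i, p i ≠ 0) (hsum : 1 ≤ ∑ i, (p i)⁻¹) :
    MultilinearMap 𝕜 (fun i => lp (fun _ : α => 𝕜) (p i)) 𝕜 where
  toFun x := ∑' n, coordProd 𝕜 p n x
  map_update_add' x i y z := by
    simp only [MultilinearMap.map_update_add]
    exact (summable_norm_coordProd 𝕜 hp hsum _).of_norm.tsum_add
      (summable_norm_coordProd 𝕜 hp hsum _).of_norm
  map_update_smul' x i c y := by
    simp only [MultilinearMap.map_update_smul, tsum_const_smul'']

variable [∀ i, Fact (1 ≤ p i)]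

/-- The diagonal form `x ↦ ∑' n, ∏ i, x i n` as a continuous multilinear form on `ℓ^{p i}` spaces
over an arbitrary index type `α`. -/
def diagonalForm (hsum : 1 ≤ ∑ i, (p i)⁻¹) :
    ContinuousMultilinearMap 𝕜 (fun i => lp (fun _ : α => 𝕜) (p i)) 𝕜 :=
  have hp i : p i ≠ 0 := (zero_lt_one.trans_le (Fact.out : 1 ≤ p i)).ne'
  (diagonalMultilinearMap 𝕜 hp hsum).mkContinuous 1 fun x =>
    (norm_tsum_coordProd_le 𝕜 hp hsum x).trans_eq (one_mul _).symm

lemma diagonalForm_apply (hsum : 1 ≤ ∑ i, (p i)⁻¹) (x : ∀ i, lp (fun _ : α => 𝕜) (p i)) :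
    diagonalForm 𝕜 hsum x = ∑' n, ∏ i, x i n := rfl

variable [DecidableEq α]

lemma diagonalForm_single_const [Nonempty ι] (hsum : 1 ≤ ∑ i, (p i)⁻¹) (n : α) :
    diagonalForm 𝕜 hsum (fun i => lp.single (p i) n 1) = 1 := by
  rw [diagonalForm_apply, tsum_eq_single n]
  · simp
  · intro l hl
    exact Finset.prod_eq_zero (Finset.mem_univ (Classical.arbitrary ι))
      (lp.single_apply_ne _ _ _ hl)

lemma diagonalForm_single_of_ne (hsum : 1 ≤ ∑ i, (p i)⁻¹) {j : ι → α} {i i' : ι}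
    (hj : j i ≠ j i') : diagonalForm 𝕜 hsum (fun i => lp.single (p i) (j i) 1) = 0 := by
  have term_eq_zero (n : α) :
      ∏ i, (lp.single (p i) (j i) 1 : lp (fun _ : α => 𝕜) (p i)) n = 0 := by
    rcases ne_or_eq n (j i) with hn | rfl
    · exact Finset.prod_eq_zero (Finset.mem_univ i) (lp.single_apply_ne _ _ _ hn)
    · exact Finset.prod_eq_zero (Finset.mem_univ i') (lp.single_apply_ne _ _ _ hj)
  simp only [diagonalForm_apply, term_eq_zero, tsum_zero]

end DiagonalForm

lemma sum_inv_ofReal {ι : Type*} (s : Finset ι) {p : ι → ℝ} (hp : ∀ i ∈ s, 0 < p i) :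
    ∑ i ∈ s, (ENNReal.ofReal (p i))⁻¹ = ENNReal.ofReal (∑ i ∈ s, 1 / p i) := by
  rw [ENNReal.ofReal_sum_of_nonneg fun i hi => (one_div_pos.2 (hp i hi)).le]
  exact Finset.sum_congr rfl fun i hi => by rw [one_div, ENNReal.ofReal_inv_of_pos (hp i hi)]

theorem no_finite_outer_exponent_general (𝕂 : Type*) [RCLike 𝕂] {m : ℕ} (p : Fin m → ℝ≥0∞)
    [∀ i, Fact (1 ≤ p i)] (hsum : 1 ≤ ∑ i, (p i)⁻¹) :
    ∃ A : ContinuousMultilinearMap 𝕂 (fun i => lp (fun _ : ℕ => 𝕂) (p i)) 𝕂,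
      (∀ j : Fin m → ℕ, ∃ r : ℝ, 0 ≤ r ∧ A (fun i => lp.single (p i) (j i) 1) = (r : 𝕂)) ∧
      ∀ q : Fin m → ℝ, (∀ k, 0 < q k) →
        mixedNorm q (fun t => ENNReal.ofReal
          (RCLike.re (A (fun i => lp.single (p i) (t i) 1)))) = ⊤ := by
  obtain _ | k := m
  · simp at hsum
  refine ⟨diagonalForm 𝕂 hsum, fun j => ?_, fun q hq => ?_⟩
  · by_cases hj : ∃ i, j i ≠ j 0
    · obtain ⟨i, hi⟩ := hj
      exact ⟨0, le_rfl, by simpa using diagonalForm_single_of_ne 𝕂 hsum hi⟩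
    · push Not at hj
      exact ⟨1, zero_le_one, by simpa [hj] using diagonalForm_single_const 𝕂 hsum (j 0)⟩
  · refine mixedNorm_eq_top_of_forall_le hq one_ne_zero fun n => ⟨fun _ => n, ?_⟩
    have cons_eq_const : (Fin.cons n fun _ => n : Fin (k + 1) → ℕ) = fun _ => n :=
      Fin.cons_self_tail fun _ => n
    simp only [cons_eq_const, diagonalForm_single_const, RCLike.one_re, ENNReal.ofReal_one, le_rfl]

/-- **Failure of the Hardy–Littlewood inequality with finite outer exponent when
`1/p₁ + ⋯ + 1/p_m ≥ 1`.**  Let `m ≥ 1` and `p₁, …, p_m ∈ (1, ∞)` with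
`1/p₁ + ⋯ + 1/p_m ≥ 1`, and let `q₁, …, q_m ∈ (0, ∞)` be finite exponents.  Then
the inequality
`(Σ_{j₁} (Σ_{j₂} ⋯ (Σ_{j_m} A(e_{j₁},…,e_{j_m})^{q_m})^{q_{m-1}/q_m} ⋯ )^{q₁/q₂})^{1/q₁} ≤ ‖A‖`
fails for some bounded nonnegative `m`-linear form
`A : ℓ_{p₁} × ⋯ × ℓ_{p_m} → 𝕂`. -/
theorem no_finite_outer_exponent
    (𝕂 : Type*) [RCLike 𝕂] (m : ℕ) (hm : 0 < m)
    (p : Fin m → ℝ) (hp : ∀ i, 1 < p i)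
    [∀ i, Fact (1 ≤ ENNReal.ofReal (p i))]
    (hsum : 1 ≤ ∑ i, 1 / p i)
    (q : Fin m → ℝ) (hq : ∀ k, 0 < q k) :
    ∃ A : ContinuousMultilinearMap 𝕂
        (fun i : Fin m => lp (fun _ : ℕ => 𝕂) (ENNReal.ofReal (p i))) 𝕂,
      (∀ j : Fin m → ℕ, ∃ r : ℝ, 0 ≤ r ∧
        A (fun i => lp.single (ENNReal.ofReal (p i)) (j i) 1) = (r : 𝕂)) ∧
      ¬ (mixedNorm q
            (fun t : Fin m → ℕ =>
              ENNReal.ofReal (RCLike.re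
                (A (fun i => lp.single (ENNReal.ofReal (p i)) (t i) 1))))
          ≤ ENNReal.ofReal ‖A‖) := by
  obtain ⟨A, hA, htop⟩ := no_finite_outer_exponent_general 𝕂 (fun i => ENNReal.ofReal (p i)) <| by
    rwa [sum_inv_ofReal _ fun i _ => zero_lt_one.trans (hp i), ENNReal.one_le_ofReal]
  exact ⟨A, hA, by simp [htop q hq]⟩
end
end
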